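/- (Exact decomposition of residual sums of squares under polynomial projections.) Let I₁ and I₂ be any two disjoint integer intervals of {1,…,T} and I = I₁ ∪ I₂. For any real sequence {X_i}, ‖X_I − Π_{I,r}X_I‖² = ‖X_{I₁} − Π_{I₁,r}X_{I₁}‖² + ‖X_{I₂} − Π_{I₂,r}X_{I₂}‖² + Q(I₁, I₂, {X}, r), where Q(I₁, I₂, {X}, r) = { X_{I₁}^⊤U_{I₁,r}(U_{I₁,r}^⊤U_{I₁,r})^{−1} − X_{I₂}^⊤U_{I₂,r}(U_{I₂,r}^⊤U_{I₂,r})^{−1} } · { (U_{I₁,r}^⊤U_{I₁,r})^{−1} + (U_{I₂,r}^⊤U_{I₂,r})^{−1} }^{−1} · { (U_{I₁,r}^⊤U_{I₁,r})^{−1}U_{I₁,r}^⊤X_{I₁} − (U_{I₂,r}^⊤U_{I₂,r})^{−1}U_{I₂,r}^⊤X_{I₂} }. -/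

import Mathlib

/-!
Write `A = UᵀU`, `b = Uᵀx` for each interval. By the normal equations the residual sum of squares is
`x ⬝ᵥ x - b ⬝ᵥ g` with `g = A⁻¹ b` the least-squares coefficient (`sum_residual_sq`), and `A`, `b` and
`x ⬝ᵥ x` are all additive over disjoint index sets. The claim thus reduces to an identity between
quadratic forms (`quadratic_pooling`): if `m = (A₁⁻¹ + A₂⁻¹)⁻¹ (g₁ - g₂)`, then
`g₁ - A₁⁻¹ m = g₂ + A₂⁻¹ m`, and this common vector solves the pooled normal equations
`(A₁ + A₂) g = b₁ + b₂`, since `A₁` sends it to `b₁ - m` and `A₂` sends it to `b₂ + m`.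
-/

/-!
STATEMENT 9: Exact decomposition of residual sums of squares under polynomial
projections, for two disjoint integer intervals `I₁`, `I₂` of `{1,…,T}` and
`I = I₁ ∪ I₂`.
-/

open Matrix

/-- The polynomial design matrix `U_{I,r}` with rows `(1, i/T, …, (i/T)^r)` for `i ∈ I`. -/
noncomputable def designU (T r : ℕ) (I : Finset ℕ) :
    Matrix {i // i ∈ I} (Fin (r + 1)) ℝ :=
  fun i j => (((i : ℕ) : ℝ) / (T : ℝ)) ^ (j : ℕ)

/-- Restriction `X_I` of a sequence `X` to the index set `I`. -/
def restrictVec (X : ℕ → ℝ) (I : Finset ℕ) : {i // i ∈ I} → ℝ := fun i => X i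

/-- Residual sum of squares `‖X_I − Π_{I,r} X_I‖²` after projecting onto the
column span of `U_{I,r}`. -/
noncomputable def polyRSS (T r : ℕ) (I : Finset ℕ) (X : ℕ → ℝ) : ℝ :=
  let U := designU T r I
  let Pi := U * (Uᵀ * U)⁻¹ * Uᵀ
  ∑ i : {i // i ∈ I}, (restrictVec X I i - Pi.mulVec (restrictVec X I) i) ^ 2

/-- Pythagoras for a least-squares fit: the residual is orthogonal to the columns of `U`. -/
lemma sum_residual_sq {ι κ : Type*} [Fintype ι] [Fintype κ] [DecidableEq κ]
    (U : Matrix ι κ ℝ) (h : IsUnit (Uᵀ * U).det) (x : ι → ℝ) :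
    ∑ i, (x i - (U * (Uᵀ * U)⁻¹ * Uᵀ).mulVec x i) ^ 2
      = x ⬝ᵥ x - (Uᵀ *ᵥ x) ⬝ᵥ ((Uᵀ * U)⁻¹ *ᵥ (Uᵀ *ᵥ x)) := by
  set g := (Uᵀ * U)⁻¹ *ᵥ (Uᵀ *ᵥ x) with hg
  have hP : (U * (Uᵀ * U)⁻¹ * Uᵀ) *ᵥ x = U *ᵥ g := by
    simp only [hg, Matrix.mulVec_mulVec, Matrix.mul_assoc]
  have hn : Uᵀ *ᵥ (U *ᵥ g) = Uᵀ *ᵥ x := by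
    rw [Matrix.mulVec_mulVec, hg, Matrix.mulVec_mulVec, Matrix.mul_nonsing_inv _ h,
      Matrix.one_mulVec]
  have hdot : ∀ y : ι → ℝ, y ⬝ᵥ (U *ᵥ g) = (Uᵀ *ᵥ y) ⬝ᵥ g := fun y => by
    rw [Matrix.dotProduct_mulVec, Matrix.mulVec_transpose]
  have hsum : ∑ i, (x i - (U *ᵥ g) i) ^ 2 = (x - U *ᵥ g) ⬝ᵥ (x - U *ᵥ g) := by
    simp only [dotProduct, Pi.sub_apply, sq]
  rw [hP, hsum, dotProduct_sub, hdot, Matrix.mulVec_sub, hn, sub_self, zero_dotProduct, sub_zero,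
    sub_dotProduct, dotProduct_comm (U *ᵥ g) x, hdot]

/-- The loss in explained sum of squares when two least-squares fits with Gram matrices `Aᵢ` and
moment vectors `bᵢ` are forced to share one coefficient vector. -/
lemma quadratic_pooling {κ : Type*} [Fintype κ] [DecidableEq κ]
    (A₁ A₂ : Matrix κ κ ℝ) (b₁ b₂ : κ → ℝ) (hs₁ : A₁ᵀ = A₁) (hs₂ : A₂ᵀ = A₂)
    (h₁ : IsUnit A₁.det) (h₂ : IsUnit A₂.det) (h : IsUnit (A₁ + A₂).det)
    (hm : IsUnit (A₁⁻¹ + A₂⁻¹).det) :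
    (b₁ + b₂) ⬝ᵥ ((A₁ + A₂)⁻¹ *ᵥ (b₁ + b₂))
      = b₁ ⬝ᵥ (A₁⁻¹ *ᵥ b₁) + b₂ ⬝ᵥ (A₂⁻¹ *ᵥ b₂)
        - (A₁⁻¹ *ᵥ b₁ - A₂⁻¹ *ᵥ b₂) ⬝ᵥ ((A₁⁻¹ + A₂⁻¹)⁻¹ *ᵥ (A₁⁻¹ *ᵥ b₁ - A₂⁻¹ *ᵥ b₂)) := by
  set m := (A₁⁻¹ + A₂⁻¹)⁻¹ *ᵥ (A₁⁻¹ *ᵥ b₁ - A₂⁻¹ *ᵥ b₂) with hmdef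
  have hM : A₁⁻¹ *ᵥ m + A₂⁻¹ *ᵥ m = A₁⁻¹ *ᵥ b₁ - A₂⁻¹ *ᵥ b₂ := by
    rw [← Matrix.add_mulVec, hmdef, Matrix.mulVec_mulVec, Matrix.mul_nonsing_inv _ hm,
      Matrix.one_mulVec]
  have hcancel : ∀ (A : Matrix κ κ ℝ) (_ : IsUnit A.det) (v : κ → ℝ), A *ᵥ (A⁻¹ *ᵥ v) = v := by
    intro A hA v
    rw [Matrix.mulVec_mulVec, Matrix.mul_nonsing_inv _ hA, Matrix.one_mulVec]
  have hsymm : ∀ (A : Matrix κ κ ℝ) (_ : Aᵀ = A) (v w : κ → ℝ),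
      v ⬝ᵥ (A⁻¹ *ᵥ w) = (A⁻¹ *ᵥ v) ⬝ᵥ w := by
    intro A hA v w
    rw [Matrix.dotProduct_mulVec, ← Matrix.mulVec_transpose, Matrix.transpose_nonsing_inv, hA]
  -- This common vector is the coefficient of the pooled fit.
  have hg : A₁⁻¹ *ᵥ b₁ - A₁⁻¹ *ᵥ m = A₂⁻¹ *ᵥ b₂ + A₂⁻¹ *ᵥ m := by
    rw [sub_eq_iff_eq_add, add_assoc, add_comm (A₂⁻¹ *ᵥ m), hM]; abel
  have hsol : (A₁ + A₂) *ᵥ (A₁⁻¹ *ᵥ b₁ - A₁⁻¹ *ᵥ m) = b₁ + b₂ := by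
    rw [Matrix.add_mulVec]
    nth_rewrite 2 [hg]
    rw [Matrix.mulVec_sub, Matrix.mulVec_add, hcancel _ h₁, hcancel _ h₁, hcancel _ h₂,
      hcancel _ h₂]
    abel
  have hinv : (A₁ + A₂)⁻¹ *ᵥ (b₁ + b₂) = A₁⁻¹ *ᵥ b₁ - A₁⁻¹ *ᵥ m := by
    rw [← hsol, Matrix.mulVec_mulVec, Matrix.nonsing_inv_mul _ h, Matrix.one_mulVec]
  rw [hinv, add_dotProduct]
  nth_rewrite 2 [hg]
  rw [dotProduct_sub, dotProduct_add, sub_dotProduct, hsymm _ hs₁ b₁ m, hsymm _ hs₂ b₂ m]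
  ring

lemma sum_subtype_union {M : Type*} [AddCommMonoid M] {I₁ I₂ : Finset ℕ} (h : Disjoint I₁ I₂)
    (f : ℕ → M) :
    ∑ i : {i // i ∈ I₁ ∪ I₂}, f i = ∑ i : {i // i ∈ I₁}, f i + ∑ i : {i // i ∈ I₂}, f i := by
  rw [Finset.sum_coe_sort, Finset.sum_coe_sort, Finset.sum_coe_sort, Finset.sum_union h]

lemma gram_union (T r : ℕ) {I₁ I₂ : Finset ℕ} (h : Disjoint I₁ I₂) :
    (designU T r (I₁ ∪ I₂))ᵀ * designU T r (I₁ ∪ I₂)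
      = (designU T r I₁)ᵀ * designU T r I₁ + (designU T r I₂)ᵀ * designU T r I₂ := by
  ext j k
  exact sum_subtype_union h fun i => ((i : ℝ) / T) ^ (j : ℕ) * ((i : ℝ) / T) ^ (k : ℕ)

lemma moment_union (T r : ℕ) {I₁ I₂ : Finset ℕ} (h : Disjoint I₁ I₂) (X : ℕ → ℝ) :
    (designU T r (I₁ ∪ I₂))ᵀ *ᵥ restrictVec X (I₁ ∪ I₂)
      = (designU T r I₁)ᵀ *ᵥ restrictVec X I₁ + (designU T r I₂)ᵀ *ᵥ restrictVec X I₂ := by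
  ext j
  exact sum_subtype_union h fun i => ((i : ℝ) / T) ^ (j : ℕ) * X i

lemma vecMul_mul_inv_gram {ι κ : Type*} [Fintype ι] [Fintype κ] [DecidableEq κ]
    (U : Matrix ι κ ℝ) (x : ι → ℝ) :
    x ᵥ* (U * (Uᵀ * U)⁻¹) = (Uᵀ * U)⁻¹ *ᵥ (Uᵀ *ᵥ x) := by
  rw [← Matrix.vecMul_vecMul, ← Matrix.mulVec_transpose, ← Matrix.mulVec_transpose,
    Matrix.transpose_nonsing_inv, Matrix.transpose_mul, Matrix.transpose_transpose]

theorem rss_decomposition (T r : ℕ) (I₁ I₂ : Finset ℕ)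
    (hI₁ : ∃ s e : ℕ, I₁ = Finset.Icc s e) (hI₂ : ∃ s e : ℕ, I₂ = Finset.Icc s e)
    (hI₁T : I₁ ⊆ Finset.Icc 1 T) (hI₂T : I₂ ⊆ Finset.Icc 1 T)
    (hdisj : Disjoint I₁ I₂) (X : ℕ → ℝ)
    -- full column rank assumptions
    (h₁ : IsUnit ((designU T r I₁)ᵀ * designU T r I₁).det)
    (h₂ : IsUnit ((designU T r I₂)ᵀ * designU T r I₂).det)
    (h₁₂ : IsUnit ((designU T r (I₁ ∪ I₂))ᵀ * designU T r (I₁ ∪ I₂)).det)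
    (hmid : IsUnit (((designU T r I₁)ᵀ * designU T r I₁)⁻¹
        + ((designU T r I₂)ᵀ * designU T r I₂)⁻¹).det) :
    polyRSS T r (I₁ ∪ I₂) X
      = polyRSS T r I₁ X + polyRSS T r I₂ X
        + ((Matrix.vecMul (restrictVec X I₁)
              (designU T r I₁ * ((designU T r I₁)ᵀ * designU T r I₁)⁻¹)
            - Matrix.vecMul (restrictVec X I₂)
              (designU T r I₂ * ((designU T r I₂)ᵀ * designU T r I₂)⁻¹)) ⬝ᵥ
          ((((designU T r I₁)ᵀ * designU T r I₁)⁻¹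
              + ((designU T r I₂)ᵀ * designU T r I₂)⁻¹)⁻¹.mulVec
            ((((designU T r I₁)ᵀ * designU T r I₁)⁻¹).mulVec
                ((designU T r I₁)ᵀ.mulVec (restrictVec X I₁))
              - (((designU T r I₂)ᵀ * designU T r I₂)⁻¹).mulVec
                ((designU T r I₂)ᵀ.mulVec (restrictVec X I₂))))) := by
  have hRSS : ∀ I : Finset ℕ, IsUnit ((designU T r I)ᵀ * designU T r I).det → polyRSS T r I X
      = restrictVec X I ⬝ᵥ restrictVec X I - ((designU T r I)ᵀ *ᵥ restrictVec X I) ⬝ᵥ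
        (((designU T r I)ᵀ * designU T r I)⁻¹ *ᵥ ((designU T r I)ᵀ *ᵥ restrictVec X I)) :=
    fun I hI => sum_residual_sq (designU T r I) hI (restrictVec X I)
  have hx : restrictVec X (I₁ ∪ I₂) ⬝ᵥ restrictVec X (I₁ ∪ I₂)
      = restrictVec X I₁ ⬝ᵥ restrictVec X I₁ + restrictVec X I₂ ⬝ᵥ restrictVec X I₂ :=
    sum_subtype_union hdisj fun i => X i * X i
  rw [hRSS _ h₁₂, hRSS _ h₁, hRSS _ h₂, hx, moment_union T r hdisj X, gram_union T r hdisj,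
    vecMul_mul_inv_gram, vecMul_mul_inv_gram]
  rw [gram_union T r hdisj] at h₁₂
  rw [quadratic_pooling _ _ _ _ (by simp) (by simp) h₁ h₂ h₁₂ hmid]
  ring
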